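/- Let S, S^⊥ ⊆ ℝ⁴ and suppose there exist pairwise non-null-separated points a, a', a'' ∈ S and pairwise non-null-separated points b, b', b'' ∈ S^⊥ such that S = C_b ∩ C_{b'} ∩ C_{b''} and S^⊥ = C_a ∩ C_{a'} ∩ C_{a''}. Then there exists a 3-dimensional subspace V of ℝ⁶ on which the form (·,·) is nondegenerate and indefinite such that S = {x ∈ ℝ⁴ : s_x ∈ V^⊥} and S^⊥ = {x ∈ ℝ⁴ : s_x ∈ V}; that is, S and S^⊥ form a pair of non-degenerate conjugate conics. -/

import Mathlib

/-!
In polyspherical coordinates `form33 (sx x) (sx y) = -q22 (x - y) / 2`, so lying on the cone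
centred at `p` is orthogonality to `sx p`, and each `sx p` is isotropic. The Gram matrix of three
isotropic vectors with pairwise nonzero products `p, q, r` has determinant `2 p q r ≠ 0`, so three
pairwise non-null-separated points span a nondegenerate 3-space (`eq_zero_of_gram`), which is
indefinite because it contains two isotropic vectors with nonzero product.

Let `V` be spanned by the vectors of `b, b', b''` and `W` by those of `a, a', a''`. The set `S` is
cut out by `V^⊥` by definition. Moreover `V ⊥ W`, so by nondegeneracy the six spanning vectors form
a basis of `ℝ⁶`; expanding a vector orthogonal to `W` in this basis kills the `W`-coefficients, so
`W^⊥ = V` (`mem_span_of_orthogonal`), and `Sp` is cut out by `V`.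
-/

noncomputable section

/-- The neutral bilinear form of signature (2,2) on ℝ⁴. -/
def form22 (x y : Fin 4 → ℝ) : ℝ := x 0 * y 0 + x 1 * y 1 - x 2 * y 2 - x 3 * y 3

/-- The associated neutral quadratic form `‖x‖² = x₁² + x₂² − x₃² − x₄²`. -/
def q22 (x : Fin 4 → ℝ) : ℝ := form22 x x

/-- The neutral bilinear form of signature (3,3) on ℝ⁶. -/
def form33 (s t : Fin 6 → ℝ) : ℝ :=
  s 0 * t 0 + s 1 * t 1 + s 2 * t 2 - s 3 * t 3 - s 4 * t 4 - s 5 * t 5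

/-- Diagonal polyspherical coordinates of the isotropic cone centered at `x`. -/
def sx (x : Fin 4 → ℝ) : Fin 6 → ℝ :=
  ![(1 - q22 x) / 2, x 0, x 1, x 2, x 3, (1 + q22 x) / 2]

/-- The (·,·)-orthogonal complement of a subspace of ℝ⁶. -/
def perp33 (V : Submodule ℝ (Fin 6 → ℝ)) : Submodule ℝ (Fin 6 → ℝ) where
  carrier := {s | ∀ v ∈ V, form33 s v = 0}
  zero_mem' := by intro v hv; simp [form33]
  add_mem' := by
    intro a b ha hb v hv
    have h1 := ha v hv
    have h2 := hb v hv
    simp only [form33, Pi.add_apply] at *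
    linarith [h1, h2, mul_comm (a 0) (v 0)]
  smul_mem' := by
    intro c a ha v hv
    have h := ha v hv
    simp only [form33, Pi.smul_apply, smul_eq_mul] at *
    linear_combination c * h

/-- The restriction of the (3,3)-form to `W` is nondegenerate. -/
def NondegenerateOn (W : Submodule ℝ (Fin 6 → ℝ)) : Prop :=
  ∀ w ∈ W, (∀ w' ∈ W, form33 w w' = 0) → w = 0

/-- The restriction of the (3,3)-form to `W` is nondegenerate and indefinite. -/
def IndefiniteOn (W : Submodule ℝ (Fin 6 → ℝ)) : Prop :=
  NondegenerateOn W ∧ (∃ w ∈ W, 0 < form33 w w) ∧ (∃ w ∈ W, form33 w w < 0)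

lemma form33_sx (x y : Fin 4 → ℝ) : form33 (sx x) (sx y) = -q22 (x - y) / 2 := by
  simp [form33, sx, q22, form22]
  ring

lemma form33_comm (s t : Fin 6 → ℝ) : form33 s t = form33 t s := by
  simp only [form33]; ring

lemma form33_add_left (s s' t : Fin 6 → ℝ) :
    form33 (s + s') t = form33 s t + form33 s' t := by
  simp only [form33, Pi.add_apply]; ring

lemma form33_add_right (s t t' : Fin 6 → ℝ) :
    form33 s (t + t') = form33 s t + form33 s t' := by
  simp only [form33, Pi.add_apply]; ring

lemma form33_smul_left (c : ℝ) (s t : Fin 6 → ℝ) : form33 (c • s) t = c * form33 s t := by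
  simp only [form33, Pi.smul_apply, smul_eq_mul]; ring

lemma form33_smul_right (c : ℝ) (s t : Fin 6 → ℝ) : form33 s (c • t) = c * form33 s t := by
  simp only [form33, Pi.smul_apply, smul_eq_mul]; ring

/-- The configuration of vectors attached to three pairwise non-null-separated points: isotropic,
with pairwise nonzero products. -/
structure IsoTriple (u v w : Fin 6 → ℝ) : Prop where
  uu : form33 u u = 0
  vv : form33 v v = 0
  ww : form33 w w = 0
  uv : form33 u v ≠ 0
  vw : form33 v w ≠ 0
  uw : form33 u w ≠ 0

lemma isoTriple_sx {a a' a'' : Fin 4 → ℝ} (h1 : q22 (a - a') ≠ 0) (h2 : q22 (a' - a'') ≠ 0)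
    (h3 : q22 (a - a'') ≠ 0) : IsoTriple (sx a) (sx a') (sx a'') := by
  constructor <;> rw [form33_sx] <;> first | simpa using ‹_› | simp [q22, form22]

/-- The Gram matrix of an isotropic triple is invertible. -/
lemma IsoTriple.eq_zero_of_gram {u v w : Fin 6 → ℝ} (h : IsoTriple u v w) {x y z : ℝ}
    (hu : form33 (x • u + y • v + z • w) u = 0) (hv : form33 (x • u + y • v + z • w) v = 0)
    (hw : form33 (x • u + y • v + z • w) w = 0) : x = 0 ∧ y = 0 ∧ z = 0 := by
  simp only [form33_add_left, form33_smul_left, h.uu, h.vv, h.ww, form33_comm v u,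
    form33_comm w u, form33_comm w v] at hu hv hw
  have hx : x * (form33 u v * form33 u w) = 0 := by
    linear_combination (form33 u w * hv + form33 u v * hw - form33 v w * hu) / 2
  have hy : y * (form33 u v * form33 v w) = 0 := by
    linear_combination (form33 v w * hu + form33 u v * hw - form33 u w * hv) / 2
  have hz : z * (form33 u w * form33 v w) = 0 := by
    linear_combination (form33 v w * hu + form33 u w * hv - form33 u v * hw) / 2
  simpa [h.uv, h.vw, h.uw] using And.intro hx (And.intro hy hz)

lemma mem_span_three {u v w t : Fin 6 → ℝ} :
    t ∈ Submodule.span ℝ (Set.range ![u, v, w]) ↔ ∃ x y z : ℝ, t = x • u + y • v + z • w := by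
  rw [Submodule.mem_span_range_iff_exists_fun]
  constructor
  · rintro ⟨c, rfl⟩
    exact ⟨c 0, c 1, c 2, by simp [Fin.sum_univ_three]⟩
  · rintro ⟨x, y, z, rfl⟩
    exact ⟨![x, y, z], by simp [Fin.sum_univ_three]⟩

lemma IsoTriple.linearIndependent {u v w : Fin 6 → ℝ} (h : IsoTriple u v w) :
    LinearIndependent ℝ ![u, v, w] := by
  rw [Fintype.linearIndependent_iff]
  intro g hg
  simp only [Fin.sum_univ_three, Matrix.cons_val] at hg
  have := h.eq_zero_of_gram (x := g 0) (y := g 1) (z := g 2) (by rw [hg]; simp [form33])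
    (by rw [hg]; simp [form33]) (by rw [hg]; simp [form33])
  intro i
  fin_cases i
  exacts [this.1, this.2.1, this.2.2]

lemma IsoTriple.indefiniteOn {u v w : Fin 6 → ℝ} (h : IsoTriple u v w) :
    IndefiniteOn (Submodule.span ℝ (Set.range ![u, v, w])) := by
  have hu : u ∈ Submodule.span ℝ (Set.range ![u, v, w]) := Submodule.subset_span ⟨0, rfl⟩
  have hv : v ∈ Submodule.span ℝ (Set.range ![u, v, w]) := Submodule.subset_span ⟨1, rfl⟩
  have hw : w ∈ Submodule.span ℝ (Set.range ![u, v, w]) := Submodule.subset_span ⟨2, rfl⟩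
  refine ⟨?_, ?_⟩
  · intro t ht ht0
    obtain ⟨x, y, z, rfl⟩ := mem_span_three.1 ht
    obtain ⟨rfl, rfl, rfl⟩ := h.eq_zero_of_gram (ht0 u hu) (ht0 v hv) (ht0 w hw)
    simp
  · have hsq : 0 < form33 u v * form33 u v := mul_self_pos.2 h.uv
    -- `u + c v` has square `2 c (u, v)`; take `c = ± (u, v)`
    have key (c : ℝ) : form33 (u + c • v) (u + c • v) = 2 * c * form33 u v := by
      simp only [form33_add_left, form33_add_right, form33_smul_left, form33_smul_right,
        h.uu, h.vv, form33_comm v u]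
      ring
    refine ⟨⟨_, add_mem hu (Submodule.smul_mem _ (form33 u v) hv), ?_⟩,
      ⟨_, add_mem hu (Submodule.smul_mem _ (-form33 u v) hv), ?_⟩⟩ <;> rw [key] <;> linarith

/-- If two isotropic triples are mutually orthogonal, their spans are complementary, so the
orthogonal complement of the first is the span of the second. -/
lemma mem_span_of_orthogonal {u v w u' v' w' : Fin 6 → ℝ} (h : IsoTriple u v w)
    (h' : IsoTriple u' v' w')
    (ho : ∀ s ∈ Submodule.span ℝ (Set.range ![u', v', w']),
      form33 s u = 0 ∧ form33 s v = 0 ∧ form33 s w = 0)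
    {t : Fin 6 → ℝ} (ht : form33 t u = 0 ∧ form33 t v = 0 ∧ form33 t w = 0) :
    t ∈ Submodule.span ℝ (Set.range ![u', v', w']) := by
  set V := Submodule.span ℝ (Set.range ![u', v', w']) with hV
  set W := Submodule.span ℝ (Set.range ![u, v, w]) with hW
  have hdV : Module.finrank ℝ V = 3 := by
    simpa using finrank_span_eq_card h'.linearIndependent
  have hdW : Module.finrank ℝ W = 3 := by
    simpa using finrank_span_eq_card h.linearIndependent
  have key : ∀ s ∈ W, form33 s u = 0 ∧ form33 s v = 0 ∧ form33 s w = 0 → s = 0 := by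
    rintro s hs ⟨h1, h2, h3⟩
    obtain ⟨x, y, z, rfl⟩ := mem_span_three.1 hs
    obtain ⟨rfl, rfl, rfl⟩ := h.eq_zero_of_gram h1 h2 h3
    simp
  have hinf : W ⊓ V = ⊥ := by
    rw [eq_bot_iff]
    rintro s ⟨hs, hs'⟩
    exact key s hs (ho s hs')
  have hsup : W ⊔ V = ⊤ := by
    apply Submodule.eq_top_of_finrank_eq
    have := Submodule.finrank_sup_add_finrank_inf_eq W V
    rw [hinf, hdV, hdW, finrank_bot] at this
    simpa using this
  obtain ⟨s, hs, r, hr, rfl⟩ := Submodule.mem_sup.1 (hsup ▸ Submodule.mem_top : t ∈ W ⊔ V)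
  have hr0 := ho r hr
  simp only [form33_add_left, hr0, add_zero] at ht
  rw [key s hs ht, zero_add]
  exact hr

theorem intersections_of_cones_are_conjugate_conics (S Sp : Set (Fin 4 → ℝ))
    (a a' a'' b b' b'' : Fin 4 → ℝ)
    (haS : a ∈ S) (ha'S : a' ∈ S) (ha''S : a'' ∈ S)
    (hbS : b ∈ Sp) (hb'S : b' ∈ Sp) (hb''S : b'' ∈ Sp)
    (ha1 : q22 (a - a') ≠ 0) (ha2 : q22 (a' - a'') ≠ 0) (ha3 : q22 (a - a'') ≠ 0)
    (hb1 : q22 (b - b') ≠ 0) (hb2 : q22 (b' - b'') ≠ 0) (hb3 : q22 (b - b'') ≠ 0)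
    (hS : S = {x : Fin 4 → ℝ | q22 (x - b) = 0 ∧ q22 (x - b') = 0 ∧ q22 (x - b'') = 0})
    (hSp : Sp = {x : Fin 4 → ℝ | q22 (x - a) = 0 ∧ q22 (x - a') = 0 ∧ q22 (x - a'') = 0}) :
    ∃ V : Submodule ℝ (Fin 6 → ℝ), Module.finrank ℝ V = 3 ∧ IndefiniteOn V ∧
      S = {x : Fin 4 → ℝ | sx x ∈ perp33 V} ∧ Sp = {x : Fin 4 → ℝ | sx x ∈ V} := by
  have hA := isoTriple_sx ha1 ha2 ha3
  have hB := isoTriple_sx hb1 hb2 hb3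
  have hcone (x p : Fin 4 → ℝ) : q22 (x - p) = 0 ↔ form33 (sx x) (sx p) = 0 := by
    rw [form33_sx]; simp
  simp only [hcone] at hS hSp
  have ho : ∀ s ∈ Submodule.span ℝ (Set.range ![sx b, sx b', sx b'']),
      form33 s (sx a) = 0 ∧ form33 s (sx a') = 0 ∧ form33 s (sx a'') = 0 := by
    intro s hs
    obtain ⟨x, y, z, rfl⟩ := mem_span_three.1 hs
    rw [hSp] at hbS hb'S hb''S
    obtain ⟨h1, h2, h3⟩ := hbS
    obtain ⟨h4, h5, h6⟩ := hb'S
    obtain ⟨h7, h8, h9⟩ := hb''S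
    simp [form33_add_left, form33_smul_left, *]
  refine ⟨Submodule.span ℝ (Set.range ![sx b, sx b', sx b'']), ?_, hB.indefiniteOn, ?_, ?_⟩
  · simpa using finrank_span_eq_card hB.linearIndependent
  · rw [hS]
    ext x
    constructor
    · rintro ⟨h1, h2, h3⟩ t ht
      obtain ⟨p, q, r, rfl⟩ := mem_span_three.1 ht
      simp [form33_add_right, form33_smul_right, h1, h2, h3]
    · intro h
      exact ⟨h _ (Submodule.subset_span ⟨0, rfl⟩), h _ (Submodule.subset_span ⟨1, rfl⟩),
        h _ (Submodule.subset_span ⟨2, rfl⟩)⟩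
  · rw [hSp]
    ext x
    exact ⟨fun h => mem_span_of_orthogonal hA hB ho h, fun h => ho _ h⟩
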